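/- Let D be a lattice of languages closed under marked concatenation, let L, L' ∈ D and a ∈ A, and let K, K' be Bool(D)-covers of L and L' respectively. Then there exists a Bool(D)-cover H of the marked concatenation LaL' such that for every H ∈ H there exist K ∈ K and K' ∈ K' with H ⊆ KaK'. -/

import Mathlib

open Set

namespace Paper

abbrev Lang (A : Type) := Set (List A)
abbrev LClass (A : Type) := Set (Set (List A))

variable {A R M : Type}

/-- A lattice of languages: contains `∅` and `A*`, closed under finite union
and finite intersection. -/
def LangLattice (𝒞 : LClass A) : Prop :=
  (∅ : Lang A) ∈ 𝒞 ∧ (Set.univ : Lang A) ∈ 𝒞 ∧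
    (∀ K L : Lang A, K ∈ 𝒞 → L ∈ 𝒞 → K ∪ L ∈ 𝒞) ∧
    (∀ K L : Lang A, K ∈ 𝒞 → L ∈ 𝒞 → K ∩ L ∈ 𝒞)

/-- A Boolean algebra of languages: a lattice closed under complement. -/
def LangBoolAlg (𝒞 : LClass A) : Prop :=
  LangLattice 𝒞 ∧ ∀ L : Lang A, L ∈ 𝒞 → Lᶜ ∈ 𝒞

/-- A class is quotient-closed when it is closed under left and right quotients
by words. -/
def QuotientClosed (𝒞 : LClass A) : Prop :=
  ∀ L ∈ 𝒞, ∀ w : List A,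
    {u : List A | w ++ u ∈ L} ∈ 𝒞 ∧ {u : List A | u ++ w ∈ L} ∈ 𝒞

/-- The canonical preorder `≤_𝒞` associated with a class `𝒞`. -/
def cle (𝒞 : LClass A) (w w' : List A) : Prop := ∀ L ∈ 𝒞, w ∈ L → w' ∈ L

/-- The canonical equivalence `∼_𝒞` associated with a class `𝒞`. -/
def ceq (𝒞 : LClass A) (w w' : List A) : Prop := ∀ L ∈ 𝒞, (w ∈ L ↔ w' ∈ L)

/-- The `∼_𝒞`-class of the word `w`. -/
def cclass (𝒞 : LClass A) (w : List A) : Lang A := {v | ceq 𝒞 w v}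

/-- `D` is a `∼_𝒞`-class. -/
def IsCClass (𝒞 : LClass A) (D : Lang A) : Prop := ∃ w : List A, D = cclass 𝒞 w

/-- Multiplication of `∼_𝒞`-classes (the class of the concatenation of
representatives). -/
def cmul (𝒞 : LClass A) (D E : Lang A) : Lang A :=
  {x | ∃ u ∈ D, ∃ v ∈ E, ceq 𝒞 (u ++ v) x}

/-- Language concatenation. -/
def cat (K L : Lang A) : Lang A := {w | ∃ u ∈ K, ∃ v ∈ L, u ++ v = w}

/-- Marked concatenation `K a L`. -/
def mcat (K : Lang A) (a : A) (L : Lang A) : Lang A :=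
  {w | ∃ u ∈ K, ∃ v ∈ L, u ++ a :: v = w}

/-- Boolean closure: the least Boolean algebra containing `𝒞`. -/
def BoolC (𝒞 : LClass A) : LClass A := ⋂₀ {𝒟 : LClass A | LangBoolAlg 𝒟 ∧ 𝒞 ⊆ 𝒟}

/-- Polynomial closure: the least class containing `𝒞` closed under union and
marked concatenation. -/
def PolC (𝒞 : LClass A) : LClass A :=
  ⋂₀ {𝒟 : LClass A | 𝒞 ⊆ 𝒟 ∧
    (∀ K L : Lang A, K ∈ 𝒟 → L ∈ 𝒟 → K ∪ L ∈ 𝒟) ∧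
    (∀ (K L : Lang A) (a : A), K ∈ 𝒟 → L ∈ 𝒟 → mcat K a L ∈ 𝒟)}

/-- A cover of `L`: a finite set of languages whose union includes `L`. -/
def IsCover (Ks : LClass A) (L : Lang A) : Prop := Ks.Finite ∧ L ⊆ ⋃₀ Ks

/-- A `𝒞`-cover of `L`: a cover all of whose members belong to `𝒞`. -/
def IsCCover (𝒞 Ks : LClass A) (L : Lang A) : Prop := IsCover Ks L ∧ Ks ⊆ 𝒞

/-- `α : A* → M` is a monoid morphism. -/
def IsMonoidMorphism [Monoid M] (α : List A → M) : Prop :=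
  α [] = 1 ∧ ∀ u v : List A, α (u ++ v) = α u * α v

/-- `α` recognizes `L`. -/
def Recognizes [Monoid M] (α : List A → M) (L : Lang A) : Prop :=
  ∃ F : Set M, L = α ⁻¹' F

/-- A language is regular when it is recognized by a monoid morphism into a
finite monoid. -/
def RegularLang (L : Lang A) : Prop :=
  ∃ (N : Type) (_ : Monoid N) (_ : Finite N) (α : List A → N),
    IsMonoidMorphism α ∧ Recognizes α L

/-- The canonical order on a rating set: `r ≤ s` iff `r + s = s`. -/
def rle [Add R] (r s : R) : Prop := r + s = s

/-- A rating map: maps `∅` to `0` and commutes with binary union. -/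
def IsRatingMap [AddCommMonoid R] (ρ : Lang A → R) : Prop :=
  ρ ∅ = 0 ∧ ∀ K L : Lang A, ρ (K ∪ L) = ρ K + ρ L

/-- A nice rating map: the value of any language is a finite sum of values of
its words. -/
def IsNice [AddCommMonoid R] (ρ : Lang A → R) : Prop :=
  ∀ K : Lang A, ∃ l : List (List A), (∀ w ∈ l, w ∈ K) ∧
    ρ K = (l.map fun w => ρ {w}).sum

/-- A multiplicative rating map: also a morphism for concatenation. -/
def IsMultiplicative [Semiring R] (ρ : Lang A → R) : Prop :=
  ρ ({[]} : Lang A) = 1 ∧ ∀ K L : Lang A, ρ (cat K L) = ρ K * ρ L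

/-- An endomorphism of the additive monoid `(R, +)`. -/
def IsAddEndo [AddCommMonoid R] (γ : R → R) : Prop :=
  γ 0 = 0 ∧ ∀ r s : R, γ (r + s) = γ r + γ s

/-- A quasi-multiplicative rating map for the endomorphism `γ`. -/
def IsQuasiMult [Semiring R] (ρ : Lang A → R) (γ : R → R) : Prop :=
  IsAddEndo γ ∧ (∀ q r s : R, γ (q * γ r * s) = γ (q * r * s)) ∧
    ∀ K L : Lang A, ρ (cat K L) = γ (ρ K * ρ L)

/-- The `ρ`-imprint of a set of languages. -/
def imprint [Add R] (ρ : Lang A → R) (Ks : LClass A) : Set R :=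
  {r | ∃ K ∈ Ks, rle r (ρ K)}

/-- The `𝒟`-optimal `ρ`-imprint on `L` (the imprint of any optimal `𝒟`-cover
of `L`, i.e. the intersection of the imprints of all `𝒟`-covers of `L`). -/
def optImprint [Add R] (𝒟 : LClass A) (ρ : Lang A → R) (L : Lang A) : Set R :=
  {r | ∀ Ks : LClass A, IsCCover 𝒟 Ks L → r ∈ imprint ρ Ks}

/-- Downset operation on subsets of a rating set. -/
def dclos [Add R] (U : Set R) : Set R := {r | ∃ s ∈ U, rle r s}

/-- Pointwise multiplication of subsets of a rating set. -/
def smul [Mul R] (U V : Set R) : Set R := {x | ∃ u ∈ U, ∃ v ∈ V, u * v = x}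

theorem boolC_alg (𝒟 : LClass A) : LangBoolAlg (BoolC 𝒟) := by
  refine ⟨⟨?_, ?_, ?_, ?_⟩, ?_⟩
  · intro C hC; exact hC.1.1.1
  · intro C hC; exact hC.1.1.2.1
  · intro K L hK hL C hC; exact hC.1.1.2.2.1 K L (hK C hC) (hL C hC)
  · intro K L hK hL C hC; exact hC.1.1.2.2.2 K L (hK C hC) (hL C hC)
  · intro K hK C hC; exact hC.1.2 K (hK C hC)

theorem sub_boolC (𝒟 : LClass A) : 𝒟 ⊆ BoolC 𝒟 := fun _ hK _ hC => hC.2 hK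

theorem sInter_mem_lat {𝒞 : LClass A} (h : LangLattice 𝒞) {S : LClass A} (hS : S.Finite) :
    S ⊆ 𝒞 → ⋂₀ S ∈ 𝒞 := by
  induction S, hS using Set.Finite.induction_on with
  | empty => intro _; simpa using h.2.1
  | insert _ _ ih =>
    intro hs
    rw [Set.sInter_insert]
    exact h.2.2.2 _ _ (hs (Set.mem_insert _ _)) (ih fun x hx => hs (Set.mem_insert_of_mem _ hx))

theorem ceq_mono {F G : LClass A} (h : F ⊆ G) {u v : List A} (e : ceq G u v) : ceq F u v :=
  fun L hL => e L (h hL)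

theorem boolC_sat {𝒟 : LClass A} {K : Lang A} (hK : K ∈ BoolC 𝒟) :
    ∃ F : LClass A, F.Finite ∧ F ⊆ 𝒟 ∧ ∀ u v, ceq F u v → (u ∈ K ↔ v ∈ K) := by
  refine hK {K | ∃ F : LClass A, F.Finite ∧ F ⊆ 𝒟 ∧ ∀ u v, ceq F u v → (u ∈ K ↔ v ∈ K)}
    ⟨⟨⟨?_, ?_, ?_, ?_⟩, ?_⟩, ?_⟩
  · exact ⟨∅, Set.finite_empty, Set.empty_subset _, by simp⟩
  · exact ⟨∅, Set.finite_empty, Set.empty_subset _, by simp⟩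
  · rintro K L ⟨F, hF, hFD, h⟩ ⟨G, hG, hGD, h'⟩
    refine ⟨F ∪ G, hF.union hG, Set.union_subset hFD hGD, fun u v e => ?_⟩
    exact or_congr (h u v (ceq_mono Set.subset_union_left e))
      (h' u v (ceq_mono Set.subset_union_right e))
  · rintro K L ⟨F, hF, hFD, h⟩ ⟨G, hG, hGD, h'⟩
    refine ⟨F ∪ G, hF.union hG, Set.union_subset hFD hGD, fun u v e => ?_⟩
    exact and_congr (h u v (ceq_mono Set.subset_union_left e))
      (h' u v (ceq_mono Set.subset_union_right e))
  · rintro K ⟨F, hF, hFD, h⟩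
    exact ⟨F, hF, hFD, fun u v e => not_congr (h u v e)⟩
  · intro K hK
    exact ⟨{K}, Set.finite_singleton _, by simpa using hK, fun u v e => e K rfl⟩

theorem boolC_sat_fin {𝒟 : LClass A} {Ks : LClass A} (hf : Ks.Finite) :
    Ks ⊆ BoolC 𝒟 → ∃ F : LClass A, F.Finite ∧ F ⊆ 𝒟 ∧
      ∀ K ∈ Ks, ∀ u v, ceq F u v → (u ∈ K ↔ v ∈ K) := by
  intro hs
  choose! f hf1 hf2 hf3 using fun K (hK : K ∈ Ks) => boolC_sat (hs hK)
  refine ⟨⋃ K ∈ Ks, f K, hf.biUnion hf1, Set.iUnion₂_subset hf2, fun K hK u v e => ?_⟩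
  exact hf3 K hK u v (ceq_mono (Set.subset_biUnion_of_mem (u := f) hK) e)

theorem cclass_mem {𝒟 G : LClass A} (hG : G.Finite) (h : G ⊆ 𝒟) (w : List A) :
    cclass G w ∈ BoolC 𝒟 := by
  classical
  have e : cclass G w = ⋂₀ ((fun M : Lang A => if w ∈ M then M else Mᶜ) '' G) := by
    ext v
    simp only [cclass, ceq, Set.mem_setOf_eq, Set.sInter_image, Set.mem_iInter]
    refine forall₂_congr fun M _ => ?_
    by_cases hw : w ∈ M <;> simp [hw]
  rw [e]
  apply sInter_mem_lat (boolC_alg 𝒟).1 (hG.image _)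
  rintro _ ⟨M, hM, rfl⟩
  have hM' := sub_boolC 𝒟 (h hM)
  by_cases hw : w ∈ M
  · simpa [hw] using hM'
  · simpa [hw] using (boolC_alg 𝒟).2 M hM'

theorem cclass_finite {G : LClass A} (hG : G.Finite) : (Set.range (cclass G)).Finite := by
  refine (hG.finite_subsets.image
    (fun S : LClass A => ({v | ∀ M ∈ G, (M ∈ S ↔ v ∈ M)} : Lang A))).subset ?_
  rintro _ ⟨w, rfl⟩
  refine ⟨{M | M ∈ G ∧ w ∈ M}, fun M hM => hM.1, ?_⟩
  ext v
  simp only [cclass, ceq, Set.mem_setOf_eq]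
  exact forall₂_congr fun M hM => by simp [hM]

/-- Weak marked concatenation principle for Boolean closure. -/
theorem statement8 {A : Type} [Fintype A] (𝒟 : LClass A) (hlat : LangLattice 𝒟)
    (hmcat : ∀ (K L : Lang A) (a : A), K ∈ 𝒟 → L ∈ 𝒟 → mcat K a L ∈ 𝒟)
    (L L' : Lang A) (hL : L ∈ 𝒟) (hL' : L' ∈ 𝒟) (a : A)
    (Ks Ks' : LClass A)
    (hKs : IsCCover (BoolC 𝒟) Ks L) (hKs' : IsCCover (BoolC 𝒟) Ks' L') :
    ∃ Hs : LClass A, IsCCover (BoolC 𝒟) Hs (mcat L a L') ∧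
      ∀ H ∈ Hs, ∃ K ∈ Ks, ∃ K' ∈ Ks', H ⊆ mcat K a K' := by
  obtain ⟨F1, hF1, hF1D, hs1⟩ := boolC_sat_fin hKs.1.1 hKs.2
  obtain ⟨F2, hF2, hF2D, hs2⟩ := boolC_sat_fin hKs'.1.1 hKs'.2
  obtain ⟨F, hFdef⟩ : ∃ F : LClass A, F = (F1 ∪ F2) ∪ {L, L'} := ⟨_, rfl⟩
  have hF : F.Finite := by rw [hFdef]; exact (hF1.union hF2).union (Set.toFinite _)
  have hFD : F ⊆ 𝒟 := by
    rw [hFdef]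
    refine Set.union_subset (Set.union_subset hF1D hF2D) ?_
    rintro x (rfl | rfl) <;> assumption
  have h1F : F1 ⊆ F := by rw [hFdef]; intro x hx; exact Or.inl (Or.inl hx)
  have h2F : F2 ⊆ F := by rw [hFdef]; intro x hx; exact Or.inl (Or.inr hx)
  have hLF : L ∈ F := by rw [hFdef]; exact Or.inr (Or.inl rfl)
  have hLF' : L' ∈ F := by rw [hFdef]; exact Or.inr (Or.inr rfl)
  obtain ⟨G, hGdef⟩ : ∃ G : LClass A,
      G = (fun p : LClass A × LClass A => mcat (⋂₀ p.1) a (⋂₀ p.2)) ''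
        ({S | S ⊆ F} ×ˢ {S | S ⊆ F}) := ⟨_, rfl⟩
  have hG : G.Finite := by
    rw [hGdef]; exact (hF.finite_subsets.prod hF.finite_subsets).image _
  have hGD : G ⊆ 𝒟 := by
    rw [hGdef]
    rintro _ ⟨⟨S, T⟩, ⟨hS, hT⟩, rfl⟩
    have hS : S ⊆ F := hS
    have hT : T ⊆ F := hT
    exact hmcat _ _ _ (sInter_mem_lat hlat (hF.subset hS) (hS.trans hFD))
      (sInter_mem_lat hlat (hF.subset hT) (hT.trans hFD))
  refine ⟨cclass G '' mcat L a L', ⟨⟨(cclass_finite hG).subset (Set.image_subset_range _ _), ?_⟩, ?_⟩, ?_⟩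
  · intro w hw
    exact ⟨_, ⟨w, hw, rfl⟩, fun _ _ => Iff.rfl⟩
  · rintro _ ⟨w, -, rfl⟩
    exact cclass_mem hG hGD w
  rintro _ ⟨w, hw, rfl⟩
  let τ : List A → LClass A := fun u => {X | X ∈ F ∧ u ∈ X}
  have hτF : ∀ u, τ u ⊆ F := fun u X hX => hX.1
  have hτ : ∀ u v, τ u = τ v → ceq F u v := by
    intro u v e X hX
    have : X ∈ τ u ↔ X ∈ τ v := by rw [e]
    exact ⟨fun h => (this.1 ⟨hX, h⟩).2, fun h => (this.2 ⟨hX, h⟩).2⟩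
  let P : Set (LClass A × LClass A) :=
    {p | ∃ u v, u ++ a :: v = w ∧ τ u = p.1 ∧ τ v = p.2 ∧ u ∈ L ∧ v ∈ L'}
  have hP : P.Finite := by
    refine (hF.finite_subsets.prod hF.finite_subsets).subset ?_
    rintro ⟨S, T⟩ ⟨u, v, -, rfl, rfl, -, -⟩
    exact ⟨hτF u, hτF v⟩
  have hPn : P.Nonempty := by
    obtain ⟨u, hu, v, hv, e⟩ := hw
    exact ⟨(τ u, τ v), u, v, e, rfl, rfl, hu, hv⟩
  obtain ⟨⟨S, T⟩, hmax⟩ := hP.exists_maximal hPn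
  obtain ⟨u, v, e, hS, hT, hu, hv⟩ := hmax.prop
  simp only at hS hT
  subst hS hT
  obtain ⟨K, hK, huK⟩ := hKs.1.2 hu
  obtain ⟨K', hK', hvK'⟩ := hKs'.1.2 hv
  refine ⟨K, hK, K', hK', ?_⟩
  intro x hx
  -- pull back: x and w lie in the same members of G
  have hwG : w ∈ mcat (⋂₀ τ u) a (⋂₀ τ v) := ⟨u, fun X hX => hX.2, v, fun X hX => hX.2, e⟩
  have key : ∀ y z, τ y ⊆ F → τ z ⊆ F → mcat (⋂₀ τ y) a (⋂₀ τ z) ∈ G := by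
    intro y z h1 h2
    rw [hGdef]; exact ⟨(τ y, τ z), ⟨h1, h2⟩, rfl⟩
  obtain ⟨y, hy, z, hz, e'⟩ := (hx _ (key u v (hτF u) (hτF v))).1 hwG
  have hyS : τ u ⊆ τ y := fun X hX => ⟨hX.1, hy X hX⟩
  have hzT : τ v ⊆ τ z := fun X hX => ⟨hX.1, hz X hX⟩
  have hxG : x ∈ mcat (⋂₀ τ y) a (⋂₀ τ z) := ⟨y, fun X hX => hX.2, z, fun X hX => hX.2, e'⟩
  obtain ⟨u2, hu2, v2, hv2, e2⟩ := (hx _ (key y z (hτF y) (hτF z))).2 hxG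
  have hyu2 : τ y ⊆ τ u2 := fun X hX => ⟨hX.1, hu2 X hX⟩
  have hzv2 : τ z ⊆ τ v2 := fun X hX => ⟨hX.1, hv2 X hX⟩
  have hu2L : u2 ∈ L := (hyu2 (hyS ⟨hLF, hu⟩)).2
  have hv2L : v2 ∈ L' := (hzv2 (hzT ⟨hLF', hv⟩)).2
  have hle : (τ u2, τ v2) ≤ (τ u, τ v) :=
    hmax.le_of_ge ⟨u2, v2, e2, rfl, rfl, hu2L, hv2L⟩ ⟨hyS.trans hyu2, hzT.trans hzv2⟩
  have ey : τ u = τ y := Set.Subset.antisymm hyS (hyu2.trans hle.1)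
  have ez : τ v = τ z := Set.Subset.antisymm hzT (hzv2.trans hle.2)
  exact ⟨y, (hs1 K hK u y (ceq_mono h1F (hτ _ _ ey))).1 huK,
    z, (hs2 K' hK' v z (ceq_mono h2F (hτ _ _ ez))).1 hvK', e'⟩

end Paper
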